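/- Let γ be the Euler–Mascheroni constant and h_α(x) = ((1−x²)/(1+x²))((1/2)log(1+x²) − 1 + γ) + (2x/(1+x²)) arctan x. Then for every nonzero s ∈ ℝ, ∫_ℝ e^{isx} h_α(x) · (1/(π(1+x²))) dx = −|s| e^{−|s|} log|s|. -/

import Mathlib

open MeasureTheory Real

/-!
For `0 < Re z` the Mellin transform of `t ↦ exp (-z t)` at `a` is `z ^ (-a) Γ(a)`: both sides are
holomorphic in `z` and agree on the positive reals. Differentiating in `a` at `a = 2`, where
`Γ'(2) = 1 - γ`, gives `∫₀^∞ t log t exp (-z t) dt = (1 - γ - log z) / z²`.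
At `z = 1 + i x` this is, up to sign, the transform over the half-line of
`Φ_α(s) = -|s| exp (-|s|) log |s|`. As `Φ_α` is real and even, its Fourier transform is twice the
real part, which is `2π h_α(x) f(x)`. The latter is `O(|x| ^ (-3/2))`, hence integrable, and
Fourier inversion recovers `Φ_α`.
-/

section Mellin

open Set Filter Asymptotics Topology

variable {z a : ℂ}

lemma isBigO_cexp_neg_mul_atTop (z : ℂ) :
    (fun t : ℝ ↦ Complex.exp (-(z * t))) =O[atTop] fun t ↦ Real.exp (-z.re * t) :=
  IsBigO.of_norm_left <| (isBigO_refl _ _).congr_left fun t ↦ by simp [Complex.norm_exp]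

lemma isBigO_cexp_neg_mul_nhdsGT_zero (z : ℂ) :
    (fun t : ℝ ↦ Complex.exp (-(z * t))) =O[𝓝[>] 0] fun t ↦ t ^ (-0 : ℝ) := by
  have hcont : Continuous fun t : ℝ ↦ Complex.exp (-(z * t)) := by fun_prop
  simpa only [neg_zero, rpow_zero] using
    ((hcont.tendsto 0).isBigO_one ℝ).mono nhdsWithin_le_nhds

lemma locallyIntegrableOn_cexp_neg_mul (z : ℂ) (s : Set ℝ) :
    LocallyIntegrableOn (fun t : ℝ ↦ Complex.exp (-(z * t))) s := by
  have hcont : Continuous fun t : ℝ ↦ Complex.exp (-(z * t)) := by fun_prop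
  exact hcont.locallyIntegrable.locallyIntegrableOn s

lemma mellinConvergent_cexp_neg_mul (hz : 0 < z.re) (ha : 0 < a.re) :
    MellinConvergent (fun t : ℝ ↦ Complex.exp (-(z * t))) a :=
  mellinConvergent_of_isBigO_rpow_exp hz (locallyIntegrableOn_cexp_neg_mul z _)
    (isBigO_cexp_neg_mul_atTop z) (isBigO_cexp_neg_mul_nhdsGT_zero z) ha

lemma hasDerivAt_mellin_cexp_neg_mul_rate (hz : 0 < z.re) (ha : 0 < a.re) :
    HasDerivAt (fun w : ℂ ↦ mellin (fun t : ℝ ↦ Complex.exp (-(w * t))) a)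
      (-mellin (fun t : ℝ ↦ Complex.exp (-(z * t))) (a + 1)) z := by
  have hnhds : {w : ℂ | z.re / 2 < w.re} ∈ 𝓝 z :=
    (isOpen_lt continuous_const Complex.continuous_re).mem_nhds (half_lt_self hz)
  have hdom : MellinConvergent (fun t : ℝ ↦ Complex.exp (-(((z.re / 2 : ℝ) : ℂ) * t))) (a + 1) :=
    mellinConvergent_cexp_neg_mul (by simpa using hz)
      (by rw [Complex.add_re, Complex.one_re]; positivity)
  have hderiv := hasDerivAt_integral_of_dominated_loc_of_deriv_le
    (μ := volume.restrict (Ioi (0 : ℝ)))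
    (F := fun w t ↦ (t : ℂ) ^ (a - 1) • Complex.exp (-(w * t)))
    (F' := fun w t ↦ -((t : ℂ) ^ (a + 1 - 1) • Complex.exp (-(w * t))))
    (bound := fun t ↦ ‖(t : ℂ) ^ (a + 1 - 1) • Complex.exp (-(((z.re / 2 : ℝ) : ℂ) * t))‖)
    hnhds (.of_forall fun w ↦ Measurable.aestronglyMeasurable (by fun_prop))
    (mellinConvergent_cexp_neg_mul hz ha) (Measurable.aestronglyMeasurable (by fun_prop))
    ?bound hdom.norm ?deriv
  · simpa only [mellin, integral_neg] using hderiv.2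
  case bound =>
    filter_upwards [ae_restrict_mem measurableSet_Ioi] with t (ht : 0 < t) w (hw : z.re / 2 < w.re)
    rw [norm_neg, norm_smul, norm_smul, Complex.norm_exp, Complex.norm_exp]
    gcongr _ * Real.exp ?_
    simpa using mul_le_mul_of_nonneg_right hw.le ht.le
  case deriv =>
    filter_upwards [ae_restrict_mem measurableSet_Ioi] with t (ht : 0 < t) w _
    have hpow : (t : ℂ) ^ (a + 1 - 1) = (t : ℂ) ^ (a - 1) * t := by
      rw [add_sub_right_comm, Complex.cpow_add _ _ (by exact_mod_cast ht.ne'), Complex.cpow_one]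
    have hexp : HasDerivAt (fun w : ℂ ↦ Complex.exp (-(w * t))) (Complex.exp (-(w * t)) * -t) w :=
      (hasDerivAt_mul_const (t : ℂ)).neg.cexp
    refine (hexp.const_smul ((t : ℂ) ^ (a - 1))).congr_deriv ?_
    simp only [smul_eq_mul, hpow]
    ring

lemma eqOn_re_pos_of_forall_ofReal_eq {E : Type*} [NormedAddCommGroup E] [NormedSpace ℂ E]
    [CompleteSpace E] {f g : ℂ → E} (hf : DifferentiableOn ℂ f {w | 0 < w.re})
    (hg : DifferentiableOn ℂ g {w | 0 < w.re}) (hfg : ∀ r : ℝ, 0 < r → f r = g r) :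
    EqOn f g {w | 0 < w.re} := by
  have hopen : IsOpen {w : ℂ | 0 < w.re} := isOpen_lt continuous_const Complex.continuous_re
  have htendsto : Tendsto (fun r : ℝ ↦ (r : ℂ)) (𝓝[≠] 1) (𝓝[≠] 1) := by
    rw [← Complex.ofReal_one]
    refine Complex.continuous_ofReal.continuousWithinAt.tendsto_nhdsWithin fun r hr ↦ ?_
    simpa using hr
  refine (hf.analyticOnNhd hopen).eqOn_of_preconnected_of_frequently_eq (hg.analyticOnNhd hopen)
    (convex_halfSpace_re_gt 0).isPreconnected (z₀ := 1) (by simp) (htendsto.frequently ?_)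
  have hpos : ∀ᶠ r : ℝ in 𝓝[≠] 1, 0 < r := nhdsWithin_le_nhds (lt_mem_nhds one_pos)
  exact (hpos.mono hfg).frequently

lemma mellin_cexp_neg_mul (hz : 0 < z.re) (ha : 0 < a.re) :
    mellin (fun t : ℝ ↦ Complex.exp (-(z * t))) a = z ^ (-a) * Complex.Gamma a := by
  refine eqOn_re_pos_of_forall_ofReal_eq
    (f := fun w ↦ mellin (fun t : ℝ ↦ Complex.exp (-(w * t))) a)
    (g := fun w ↦ w ^ (-a) * Complex.Gamma a) (fun w hw ↦ ?_) (fun w hw ↦ ?_) (fun r hr ↦ ?_) hz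
  · exact (hasDerivAt_mellin_cexp_neg_mul_rate hw ha).differentiableAt.differentiableWithinAt
  · exact ((differentiableAt_id.cpow_const (Or.inl hw)).mul_const _).differentiableWithinAt
  · have harg : (r : ℂ).arg ≠ π := by
      rw [Complex.arg_ofReal_of_nonneg hr.le]
      exact pi_ne_zero.symm
    simpa only [mellin, smul_eq_mul, one_div, Complex.inv_cpow _ _ harg, Complex.cpow_neg]
      using Complex.integral_cpow_mul_exp_neg_mul_Ioi ha hr

lemma hasDerivAt_mellin_cexp_neg_mul (hz : 0 < z.re) (ha : 0 < a.re) :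
    MellinConvergent (fun t : ℝ ↦ Real.log t • Complex.exp (-(z * t))) a ∧
      HasDerivAt (mellin fun t : ℝ ↦ Complex.exp (-(z * t)))
        (mellin (fun t : ℝ ↦ Real.log t • Complex.exp (-(z * t))) a) a :=
  mellin_hasDerivAt_of_isBigO_rpow (locallyIntegrableOn_cexp_neg_mul z _)
    ((isBigO_cexp_neg_mul_atTop z).trans (isLittleO_exp_neg_mul_rpow_atTop hz _).isBigO)
    (lt_add_one a.re) (isBigO_cexp_neg_mul_nhdsGT_zero z) ha

lemma mellin_log_smul_cexp_neg_mul (hz : 0 < z.re) (ha : 0 < a.re) :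
    mellin (fun t : ℝ ↦ Real.log t • Complex.exp (-(z * t))) a =
      z ^ (-a) * (deriv Complex.Gamma a - Complex.log z * Complex.Gamma a) := by
  have hz0 : z ≠ 0 := by rintro rfl; simp at hz
  have hGamma : DifferentiableAt ℂ Complex.Gamma a := by
    refine Complex.differentiableAt_Gamma a fun m ham ↦ ?_
    simp only [ham, Complex.neg_re, Complex.natCast_re, Left.neg_pos_iff] at ha
    exact (Nat.cast_nonneg m).not_gt ha
  have hpow : HasDerivAt (fun b : ℂ ↦ z ^ (-b)) (z ^ (-a) * Complex.log z * -1) a :=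
    (hasDerivAt_neg a).const_cpow (Or.inl hz0)
  have hmellin : (mellin fun t : ℝ ↦ Complex.exp (-(z * t))) =ᶠ[𝓝 a]
      fun b ↦ z ^ (-b) * Complex.Gamma b := by
    filter_upwards [(isOpen_lt continuous_const Complex.continuous_re).mem_nhds ha] with b hb
    exact mellin_cexp_neg_mul hz hb
  have hderiv := (hasDerivAt_mellin_cexp_neg_mul hz ha).2.unique
    ((hpow.mul hGamma.hasDerivAt).congr_of_eventuallyEq hmellin)
  rw [hderiv]
  ring

lemma integrableOn_mul_log_mul_cexp_neg_mul (hz : 0 < z.re) :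
    IntegrableOn (fun t : ℝ ↦ (t : ℂ) * Real.log t * Complex.exp (-(z * t))) (Ioi 0) := by
  have hconv := (hasDerivAt_mellin_cexp_neg_mul hz (by simp : 0 < (2 : ℂ).re)).1
  refine IntegrableOn.congr_fun hconv (fun t _ ↦ ?_) measurableSet_Ioi
  norm_num [mul_assoc]

lemma integral_mul_log_mul_cexp_neg_mul (hz : 0 < z.re) :
    ∫ t in Ioi (0 : ℝ), (t : ℂ) * Real.log t * Complex.exp (-(z * t)) =
      (1 - eulerMascheroniConstant - Complex.log z) / z ^ 2 := by
  have hGamma : deriv Complex.Gamma 2 = 1 - eulerMascheroniConstant := by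
    simpa [one_add_one_eq_two, neg_add_eq_sub] using Complex.deriv_Gamma_nat 1
  have hmellin := mellin_log_smul_cexp_neg_mul hz (by simp : 0 < (2 : ℂ).re)
  rw [hGamma, Complex.Gamma_ofNat_eq_factorial, Complex.cpow_neg, Complex.cpow_ofNat, mellin]
    at hmellin
  calc
    ∫ t in Ioi (0 : ℝ), (t : ℂ) * Real.log t * Complex.exp (-(z * t))
      = ∫ t in Ioi (0 : ℝ), (t : ℂ) ^ ((2 : ℂ) - 1) •
          (Real.log t • Complex.exp (-(z * t))) := by norm_num [mul_assoc]
    _ = (1 - eulerMascheroniConstant - Complex.log z) / z ^ 2 := by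
      rw [hmellin]
      simp [div_eq_inv_mul]

end Mellin

section Fourier

open Set FourierTransform ComplexConjugate

lemma integrable_of_even_of_integrableOn_Ioi {E : Type*} [NormedAddCommGroup E] {f : ℝ → E}
    (heven : Function.Even f) (hf : IntegrableOn f (Ioi 0)) : Integrable f := by
  have hneg : IntegrableOn f (Iic 0) := by
    rw [integrableOn_Iic_iff_integrableOn_Iio]
    simpa [heven _] using hf.comp_neg
  simpa using hneg.union hf

lemma integral_eq_two_mul_re_setIntegral_Ioi {𝕜 : Type*} [RCLike 𝕜] {f : ℝ → 𝕜}
    (hf : Integrable f) (hconj : ∀ x, f (-x) = conj (f x)) :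
    ∫ x, f x = ((2 * RCLike.re (∫ x in Ioi 0, f x) : ℝ) : 𝕜) := by
  have hneg : ∫ x in Iic 0, f x = conj (∫ x in Ioi 0, f x) := by
    rw [← integral_conj, ← neg_zero, ← integral_comp_neg_Ioi, neg_zero]
    simp only [hconj]
  rw [← intervalIntegral.integral_Iic_add_Ioi hf.integrableOn hf.integrableOn, hneg, add_comm,
    RCLike.add_conj, RCLike.ofReal_mul, RCLike.ofReal_ofNat]

lemma integral_cexp_smul_integral_cexp_neg_smul {E : Type*} [NormedAddCommGroup E]
    [NormedSpace ℂ E] [CompleteSpace E] {f : ℝ → E} (hcont : Continuous f) (hf : Integrable f)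
    (hF : Integrable fun x : ℝ ↦ ∫ v : ℝ, Complex.exp (-(Complex.I * x * v)) • f v) (s : ℝ) :
    ∫ x : ℝ, Complex.exp (Complex.I * s * x) • ∫ v : ℝ, Complex.exp (-(Complex.I * x * v)) • f v =
      (2 * π) • f s := by
  set F : ℝ → E := fun x ↦ ∫ v : ℝ, Complex.exp (-(Complex.I * x * v)) • f v
  have hfourier : 𝓕 f = fun w ↦ F (2 * π * w) := by
    ext w
    rw [fourier_real_eq_integral_exp_smul]
    congr! 4 with v
    push_cast
    ring
  have hinv : 𝓕⁻ (𝓕 f) s = f s :=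
    congrFun (hcont.fourierInv_fourier_eq hf
      (hfourier ▸ hF.comp_mul_left' two_pi_pos.ne')) s
  calc
    ∫ x : ℝ, Complex.exp (Complex.I * s * x) • F x
      = (2 * π) • ∫ w : ℝ, Complex.exp (Complex.I * s * (2 * π * w : ℝ)) • F (2 * π * w) := by
        rw [Measure.integral_comp_mul_left fun x : ℝ ↦ Complex.exp (Complex.I * s * x) • F x,
          abs_of_pos (by positivity), smul_inv_smul₀ two_pi_pos.ne']
    _ = (2 * π) • 𝓕⁻ (𝓕 f) s := by
        rw [fourierInv_eq', hfourier]
        congr! 5 with w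
        simp only [RCLike.inner_apply, conj_trivial]
        push_cast
        ring
    _ = (2 * π) • f s := by rw [hinv]

end Fourier

section Score

open Set ComplexConjugate
open ProbabilityTheory (cauchyPDFReal)

lemma norm_one_add_mul_I (x : ℝ) : ‖(1 + x * Complex.I : ℂ)‖ = √(1 + x ^ 2) := by
  simpa using Complex.norm_add_mul_I 1 x

lemma re_clog_one_add_mul_I (x : ℝ) :
    (Complex.log (1 + x * Complex.I)).re = 1 / 2 * Real.log (1 + x ^ 2) := by
  rw [Complex.log_re, norm_one_add_mul_I, Real.log_sqrt (by positivity), div_eq_inv_mul, one_div]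

lemma im_clog_one_add_mul_I (x : ℝ) :
    (Complex.log (1 + x * Complex.I)).im = Real.arctan x := by
  rw [Complex.log_im, Complex.arg_of_re_nonneg (by simp), norm_one_add_mul_I, arctan_eq_arcsin]
  simp

lemma norm_sub_clog_le (c : ℂ) {z : ℂ} (hz : 1 ≤ ‖z‖) :
    ‖c - Complex.log z‖ ≤ (‖c‖ + 2 + π) * ‖z‖ ^ (1 / 2 : ℝ) := by
  have hre : |Real.log ‖z‖| ≤ 2 * ‖z‖ ^ (1 / 2 : ℝ) := by
    rw [abs_of_nonneg (log_nonneg hz)]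
    linarith [log_le_rpow_div (norm_nonneg z) one_half_pos]
  have hone : 1 ≤ ‖z‖ ^ (1 / 2 : ℝ) := one_le_rpow hz (by norm_num)
  calc
    ‖c - Complex.log z‖ ≤ ‖c‖ + (|Real.log ‖z‖| + |z.arg|) := by
      refine (norm_sub_le _ _).trans (add_le_add_right ?_ _)
      simpa only [Complex.log_re, Complex.log_im] using
        Complex.norm_le_abs_re_add_abs_im (Complex.log z)
    _ ≤ ‖c‖ * ‖z‖ ^ (1 / 2 : ℝ) + (2 * ‖z‖ ^ (1 / 2 : ℝ) + π * ‖z‖ ^ (1 / 2 : ℝ)) := by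
      gcongr
      · exact le_mul_of_one_le_right (norm_nonneg c) hone
      · exact (Complex.abs_arg_le_pi z).trans (le_mul_of_one_le_right pi_nonneg hone)
    _ = (‖c‖ + 2 + π) * ‖z‖ ^ (1 / 2 : ℝ) := by ring

lemma integrable_sub_clog_div_sq (c : ℂ) :
    Integrable fun x : ℝ ↦
      (c - Complex.log (1 + x * Complex.I)) / (1 + x * Complex.I) ^ 2 := by
  have hbound : Integrable fun x : ℝ ↦ (‖c‖ + 2 + π) * (1 + ‖x‖ ^ 2) ^ (-(3 / 2) / 2 : ℝ) :=
    (integrable_rpow_neg_one_add_norm_sq (by norm_num)).const_mul _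
  refine hbound.mono' (Measurable.aestronglyMeasurable (by fun_prop)) (.of_forall fun x ↦ ?_)
  have hnorm : ‖(1 + x * Complex.I : ℂ)‖ = (1 + ‖x‖ ^ 2) ^ (1 / 2 : ℝ) := by
    rw [norm_one_add_mul_I, sqrt_eq_rpow, norm_eq_abs, sq_abs]
  have hone : 1 ≤ ‖(1 + x * Complex.I : ℂ)‖ :=
    hnorm ▸ one_le_rpow (by simp [sq_nonneg]) (by norm_num)
  have hpos : 0 < ‖(1 + x * Complex.I : ℂ)‖ := zero_lt_one.trans_le hone
  calc
    ‖(c - Complex.log (1 + x * Complex.I)) / (1 + x * Complex.I) ^ 2‖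
      ≤ (‖c‖ + 2 + π) * ‖(1 + x * Complex.I : ℂ)‖ ^ (1 / 2 : ℝ) /
          ‖(1 + x * Complex.I : ℂ)‖ ^ 2 := by
      rw [norm_div, norm_pow]
      gcongr
      exact norm_sub_clog_le c hone
    _ = (‖c‖ + 2 + π) * ‖(1 + x * Complex.I : ℂ)‖ ^ (-(3 / 2) : ℝ) := by
      rw [mul_div_assoc, ← rpow_natCast, ← rpow_sub hpos]
      norm_num
    _ = (‖c‖ + 2 + π) * (1 + ‖x‖ ^ 2) ^ (-(3 / 2) / 2 : ℝ) := by
      rw [hnorm, ← rpow_mul (by positivity)]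
      norm_num

/-- The score `h_α` in the characteristic exponent `α` of the symmetric stable family with
characteristic functions `exp (-|t| ^ α)`, at the standard Cauchy law `α = 1`. -/
noncomputable def cauchyAlphaScore (x : ℝ) : ℝ :=
  (1 - x ^ 2) / (1 + x ^ 2) * (1 / 2 * Real.log (1 + x ^ 2) - 1 + eulerMascheroniConstant) +
    2 * x / (1 + x ^ 2) * Real.arctan x

/-- The derivative `Φ_α` of the stable characteristic function `exp (-|s| ^ α)` with respect to the
characteristic exponent `α`, at `α = 1`. At `s = 0` the convention `log 0 = 0` gives the correct
value `0`. -/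
noncomputable def stableCharFunAlphaDeriv (s : ℝ) : ℝ :=
  -|s| * Real.exp (-|s|) * Real.log |s|

lemma cauchyAlphaScore_mul_cauchyPDFReal (x : ℝ) :
    cauchyAlphaScore x * cauchyPDFReal 0 1 x =
      -π⁻¹ * ((1 - eulerMascheroniConstant - Complex.log (1 + x * Complex.I)) /
        (1 + x * Complex.I) ^ 2).re := by
  have hre : ((1 + x * Complex.I) ^ 2).re = 1 - x ^ 2 := by simp [pow_two]
  have him : ((1 + x * Complex.I) ^ 2).im = 2 * x := by simp [pow_two, two_mul]
  have hnormSq : Complex.normSq ((1 + x * Complex.I) ^ 2) = (1 + x ^ 2) ^ 2 := by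
    rw [Complex.normSq_apply, hre, him]
    ring
  simp only [Complex.div_re, hre, him, hnormSq, Complex.sub_re, Complex.sub_im, Complex.one_re,
    Complex.one_im, Complex.ofReal_re, Complex.ofReal_im, re_clog_one_add_mul_I,
    im_clog_one_add_mul_I, cauchyAlphaScore, cauchyPDFReal, NNReal.coe_one, sub_zero]
  field_simp
  ring

lemma integrable_cauchyAlphaScore_mul_cauchyPDFReal :
    Integrable fun x ↦ cauchyAlphaScore x * cauchyPDFReal 0 1 x := by
  simp only [cauchyAlphaScore_mul_cauchyPDFReal]
  exact (integrable_sub_clog_div_sq _).re.const_mul _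

lemma continuous_stableCharFunAlphaDeriv : Continuous stableCharFunAlphaDeriv := by
  have heq : stableCharFunAlphaDeriv = fun s ↦ Real.exp (-|s|) * negMulLog |s| := by
    ext s
    rw [stableCharFunAlphaDeriv, negMulLog]
    ring
  have := continuous_negMulLog
  rw [heq]
  fun_prop

lemma even_stableCharFunAlphaDeriv : Function.Even stableCharFunAlphaDeriv := fun s ↦ by
  simp only [stableCharFunAlphaDeriv, abs_neg]

lemma cexp_neg_mul_mul_stableCharFunAlphaDeriv (c : ℂ) {v : ℝ} (hv : 0 < v) :
    Complex.exp (-(c * v)) * stableCharFunAlphaDeriv v =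
      -(v * Real.log v * Complex.exp (-((1 + c) * v))) := by
  have hexp : Complex.exp (-((1 + c) * v)) = Complex.exp (-(c * v)) * Complex.exp (-v) := by
    rw [← Complex.exp_add]
    ring_nf
  rw [hexp, stableCharFunAlphaDeriv, abs_of_pos hv]
  push_cast
  ring

lemma integrable_stableCharFunAlphaDeriv :
    Integrable fun v ↦ (stableCharFunAlphaDeriv v : ℂ) := by
  refine integrable_of_even_of_integrableOn_Ioi
    (fun v ↦ congrArg _ (even_stableCharFunAlphaDeriv v)) ?_
  refine (integrableOn_mul_log_mul_cexp_neg_mul (z := 1) (by simp)).neg.congr_fun (fun v hv ↦ ?_)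
    measurableSet_Ioi
  simpa using (cexp_neg_mul_mul_stableCharFunAlphaDeriv 0 hv).symm

lemma integral_cexp_neg_mul_stableCharFunAlphaDeriv (x : ℝ) :
    ∫ v : ℝ, Complex.exp (-(Complex.I * x * v)) * stableCharFunAlphaDeriv v =
      ((2 * π * (cauchyAlphaScore x * cauchyPDFReal 0 1 x) : ℝ) : ℂ) := by
  have hint : Integrable fun v : ℝ ↦
      Complex.exp (-(Complex.I * x * v)) * stableCharFunAlphaDeriv v := by
    refine integrable_stableCharFunAlphaDeriv.bdd_mul (c := 1)
      (Measurable.aestronglyMeasurable (by fun_prop)) (.of_forall fun v ↦ ?_)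
    simp [Complex.norm_exp]
  have hconj (v : ℝ) :
      Complex.exp (-(Complex.I * x * (-v : ℝ))) * stableCharFunAlphaDeriv (-v) =
        conj (Complex.exp (-(Complex.I * x * v)) * stableCharFunAlphaDeriv v) := by
    simp [even_stableCharFunAlphaDeriv v, ← Complex.exp_conj]
  have hhalf : ∫ v in Ioi (0 : ℝ), Complex.exp (-(Complex.I * x * v)) * stableCharFunAlphaDeriv v =
      -((1 - eulerMascheroniConstant - Complex.log (1 + x * Complex.I)) /
        (1 + x * Complex.I) ^ 2) := by
    rw [← integral_mul_log_mul_cexp_neg_mul (by simp), ← integral_neg]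
    refine setIntegral_congr_fun measurableSet_Ioi fun v hv ↦ ?_
    simpa only [mul_comm Complex.I] using
      cexp_neg_mul_mul_stableCharFunAlphaDeriv (Complex.I * x) hv
  rw [integral_eq_two_mul_re_setIntegral_Ioi hint hconj, hhalf,
    cauchyAlphaScore_mul_cauchyPDFReal]
  simp only [RCLike.re_to_complex, Complex.neg_re, Complex.coe_algebraMap]
  congr 1
  field_simp

lemma integral_cexp_mul_cauchyAlphaScore (s : ℝ) :
    ∫ x : ℝ, Complex.exp (Complex.I * s * x) *
      ((cauchyAlphaScore x * cauchyPDFReal 0 1 x : ℝ) : ℂ) = stableCharFunAlphaDeriv s := by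
  have hinv := integral_cexp_smul_integral_cexp_neg_smul
    (f := fun v ↦ (stableCharFunAlphaDeriv v : ℂ))
    (Complex.continuous_ofReal.comp continuous_stableCharFunAlphaDeriv)
    integrable_stableCharFunAlphaDeriv
  simp only [smul_eq_mul, integral_cexp_neg_mul_stableCharFunAlphaDeriv] at hinv
  specialize hinv (integrable_cauchyAlphaScore_mul_cauchyPDFReal.const_mul _).ofReal s
  refine mul_left_cancel₀ (by exact_mod_cast two_pi_pos.ne' : ((2 * π : ℝ) : ℂ) ≠ 0) ?_
  rw [← integral_const_mul]
  simpa only [Complex.ofReal_mul (2 * π), mul_left_comm (Complex.exp _), Complex.real_smul]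
    using hinv

end Score

/-- Fourier-kernel transform of the Cauchy `α`-score:
`∫ e^{isx} h_α(x) f(x) dx = −|s| e^{−|s|} log|s|` for `s ≠ 0`. -/
theorem stmt17 (s : ℝ) (hs : s ≠ 0) :
    ∫ x : ℝ, Complex.exp (Complex.I * s * x)
        * ((((1 - x ^ 2) / (1 + x ^ 2)) * ((1 / 2) * Real.log (1 + x ^ 2) - 1
              + Real.eulerMascheroniConstant)
            + (2 * x / (1 + x ^ 2)) * Real.arctan x) * (1 / (π * (1 + x ^ 2))) : ℝ)
      = -((|s| : ℝ) : ℂ) * (Real.exp (-|s|) : ℂ) * ((Real.log |s| : ℝ) : ℂ) := by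
  have htransform := integral_cexp_mul_cauchyAlphaScore s
  have hpdf (x : ℝ) : ProbabilityTheory.cauchyPDFReal 0 1 x = 1 / (π * (1 + x ^ 2)) := by
    simp [ProbabilityTheory.cauchyPDFReal, add_comm, mul_comm]
  simpa only [hpdf, cauchyAlphaScore, stableCharFunAlphaDeriv, Complex.ofReal_mul,
    Complex.ofReal_neg] using htransform
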